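/- Let f ∈ L¹(ℝ) with ∫_ℝ f(y) dy ≠ 0, and let g(x) = p.v.∫_ℝ f(y)/(y−x) dy be its Hilbert transform. Then limsup_{t→0⁺} t·|{x : |g(x)| > t}| ≥ 2|∫_ℝ f(y) dy| > 0; in particular g is not integrable on ℝ. -/

import Mathlib

open MeasureTheory Filter Topology

lemma ht_fatou (u : ℕ → ℝ → ℝ) (v : ℝ → ℝ) (S : Set ℝ) (t : ℝ) (B : ENNReal)
    (h : ∀ᵐ x : ℝ, x ∈ S → Tendsto (fun n => u n x) atTop (𝓝 (v x)))
    (hB : ∀ n, volume {x : ℝ | t < |u n x|} ≤ B) :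
    volume {x : ℝ | x ∈ S ∧ t < |v x|} ≤ B := by
  have hmono : Monotone (fun N : ℕ => ⋂ n ≥ N, {x : ℝ | t < |u n x|}) := by
    intro a b hab x hx
    simp only [Set.mem_iInter] at hx ⊢
    exact fun n hn => hx n (le_trans hab hn)
  calc volume {x : ℝ | x ∈ S ∧ t < |v x|}
      ≤ volume (⋃ N : ℕ, ⋂ n ≥ N, {x : ℝ | t < |u n x|}) := by
        apply measure_mono_ae
        filter_upwards [h] with x hx hxS
        obtain ⟨h1, h2⟩ := hxS
        have h3 := (hx h1).abs.eventually (lt_mem_nhds h2)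
        obtain ⟨N, hN⟩ := eventually_atTop.1 h3
        refine Set.mem_iUnion.2 ⟨N, ?_⟩
        simp only [Set.mem_iInter]
        exact fun n hn => hN n hn
    _ = ⨆ N : ℕ, volume (⋂ n ≥ N, {x : ℝ | t < |u n x|}) := hmono.measure_iUnion
    _ ≤ B := by
        refine iSup_le fun N => (measure_mono ?_).trans (hB N)
        intro x hx
        simp only [Set.mem_iInter] at hx
        exact hx N le_rfl

/-- conjugate Poisson integral -/
noncomputable def htQ (f : ℝ → ℝ) (ε x : ℝ) : ℝ := ∫ y, f y * ((y - x) / ((y - x) ^ 2 + ε ^ 2))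

noncomputable def htF (f : ℝ → ℝ) (z : ℂ) : ℂ := ∫ y : ℝ, (f y : ℂ) * ((y : ℂ) - z)⁻¹

lemma ht_norm_sub (y : ℝ) (z : ℂ) : |z.im| ≤ ‖(y : ℂ) - z‖ := by
  have := Complex.abs_im_le_norm ((y : ℂ) - z)
  simpa using this

lemma ht_ne (y : ℝ) (z : ℂ) (hz : 0 < z.im) : (y : ℂ) - z ≠ 0 := by
  have := ht_norm_sub y z
  rw [abs_of_pos hz] at this
  exact norm_pos_iff.1 (hz.trans_le this)

lemma ht_meas (z : ℂ) : Measurable (fun y : ℝ => ((y : ℂ) - z)⁻¹) := by fun_prop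

lemma htF_integrable (f : ℝ → ℝ) (hf : Integrable f) (z : ℂ) (hz : 0 < z.im) :
    Integrable (fun y : ℝ => (f y : ℂ) * ((y : ℂ) - z)⁻¹) := by
  refine Integrable.mul_bdd (c := z.im⁻¹) hf.ofReal (ht_meas z).aestronglyMeasurable ?_
  refine Eventually.of_forall fun y => ?_
  rw [norm_inv]
  have := ht_norm_sub y z
  rw [abs_of_pos hz] at this
  exact inv_anti₀ hz this

lemma htF_norm (f : ℝ → ℝ) (hf : Integrable f) (z : ℂ) (c : ℝ) (hc : 0 < c)
    (h : ∀ y : ℝ, f y ≠ 0 → c ≤ ‖(y : ℂ) - z‖) : ‖htF f z‖ ≤ (∫ y, |f y|) / c := by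
  unfold htF
  rw [div_eq_mul_inv, ← integral_mul_const]
  refine norm_integral_le_of_norm_le (hf.abs.mul_const _) (Eventually.of_forall fun y => ?_)
  rw [norm_mul, norm_inv, Complex.norm_real, Real.norm_eq_abs]
  by_cases hy : f y = 0
  · simp [hy]
  · gcongr
    exact h y hy

lemma htF_re (f : ℝ → ℝ) (hf : Integrable f) (x ε : ℝ) (hε : 0 < ε) :
    (htF f (x + ε * Complex.I)).re = htQ f ε x := by
  unfold htF htQ
  have := integral_re (htF_integrable f hf (x + ε * Complex.I) (by simpa using hε))
  simp only [RCLike.re_eq_complex_re] at this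
  rw [← this]
  congr 1
  ext y
  simp [Complex.inv_re, Complex.normSq_apply]
  left
  congr 1
  ring

lemma htF_im_nonneg (f : ℝ → ℝ) (hf : Integrable f) (h0 : ∀ y, 0 ≤ f y) (z : ℂ) (hz : 0 < z.im) :
    0 ≤ (htF f z).im := by
  unfold htF
  have := integral_im (htF_integrable f hf z hz)
  simp only [RCLike.im_eq_complex_im] at this
  rw [← this]
  apply integral_nonneg
  intro y
  simp only [Complex.mul_im, Complex.ofReal_re, Complex.ofReal_im, zero_mul, add_zero,
    Complex.inv_im, Complex.sub_im, Pi.zero_apply]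
  have := h0 y
  have := Complex.normSq_nonneg ((y : ℂ) - z)
  have : 0 ≤ -(0 - z.im) := by linarith
  positivity

lemma htF_diff (f : ℝ → ℝ) (hf : Integrable f) (z : ℂ) (hz : 0 < z.im) :
    DifferentiableAt ℂ (htF f) z := by
  have hball : ∀ w ∈ Metric.ball z (z.im / 2), z.im / 2 ≤ w.im := by
    intro w hw
    rw [Metric.mem_ball, dist_eq_norm] at hw
    have := Complex.abs_im_le_norm (w - z)
    have := abs_le.1 (this.trans hw.le)
    simp only [Complex.sub_im] at this
    linarith [this.1]
  refine (hasDerivAt_integral_of_dominated_loc_of_deriv_le (μ := volume)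
    (F := fun (z : ℂ) (y : ℝ) => (f y : ℂ) * ((y : ℂ) - z)⁻¹)
    (F' := fun (z : ℂ) (y : ℝ) => (f y : ℂ) * (((y : ℂ) - z) ^ 2)⁻¹)
    (bound := fun y => |f y| * ((z.im / 2) ^ 2)⁻¹)
    (Metric.ball_mem_nhds z (half_pos hz)) ?_ (htF_integrable f hf z hz) ?_ ?_
    (hf.abs.mul_const _) ?_).2.differentiableAt
  · exact Eventually.of_forall fun w =>
      hf.ofReal.aestronglyMeasurable.mul (ht_meas w).aestronglyMeasurable
  · refine hf.ofReal.aestronglyMeasurable.mul (Measurable.aestronglyMeasurable ?_)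
    fun_prop
  · refine Eventually.of_forall fun y w hw => ?_
    rw [norm_mul, norm_inv, Complex.norm_real, Real.norm_eq_abs, norm_pow]
    have h1 := hball w hw
    have h2 := ht_norm_sub y w
    rw [abs_of_pos (by linarith)] at h2
    gcongr
    linarith
  · refine Eventually.of_forall fun y w hw => ?_
    have h1 := hball w hw
    have h2 := ht_ne y w (by linarith)
    have h3 := ((hasDerivAt_id w).const_sub (y : ℂ)).inv h2
    have h4 := h3.const_mul (f y : ℂ)
    refine HasDerivAt.congr_deriv h4 ?_
    simp [div_eq_mul_inv]

lemma ht_add_I (w : ℂ) (hw : 0 ≤ w.im) (t : ℝ) (ht : 0 < t) : t ≤ ‖w + t * Complex.I‖ := by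
  have := Complex.abs_im_le_norm (w + t * Complex.I)
  simp only [Complex.add_im, Complex.mul_im, Complex.ofReal_re, Complex.I_im, mul_one,
    Complex.ofReal_im, Complex.I_re, mul_zero, add_zero] at this
  rw [abs_of_nonneg (by linarith)] at this
  linarith

lemma ht_phi_re (w : ℂ) (t : ℝ) : (w / (w + t * Complex.I)).re =
    (w.re ^ 2 + w.im ^ 2 + t * w.im) / (w.re ^ 2 + (w.im + t) ^ 2) := by
  rw [Complex.div_re, ← add_div]
  simp [Complex.normSq_apply]
  congr 1 <;> ring

lemma ht_phi_nonneg (w : ℂ) (hw : 0 ≤ w.im) (t : ℝ) (ht : 0 < t) :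
    0 ≤ (w / (w + t * Complex.I)).re := by
  rw [ht_phi_re]; positivity

lemma ht_phi_ge (w : ℂ) (hw : 0 ≤ w.im) (t : ℝ) (ht : 0 < t) (h : t < |w.re|) :
    1 / 4 ≤ (w / (w + t * Complex.I)).re := by
  rw [ht_phi_re, div_le_div_iff₀ (by norm_num) (by positivity)]
  have : t ^ 2 < w.re ^ 2 := by rw [← sq_abs w.re]; gcongr
  nlinarith [sq_nonneg w.im, mul_nonneg ht.le hw]

lemma ht_weak_cpt_N (f : ℝ → ℝ) (hf : Integrable f) (h0 : ∀ y, 0 ≤ f y) (R : ℝ) (hR : 0 < R)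
    (hs : ∀ y, f y ≠ 0 → |y| ≤ R) (ε t : ℝ) (hε : 0 < ε) (ht : 0 < t) (N : ℝ) (hN : 2 * R ≤ N) :
    volume ({x : ℝ | t < |htQ f ε x|} ∩ Set.Ioc (-N) N)
      ≤ ENNReal.ofReal (32 * (∫ y, |f y|) / t) := by
  set J := ∫ y, |f y| with hJ
  have hJ0 : 0 ≤ J := integral_nonneg fun y => abs_nonneg _
  have hN0 : 0 < N := by linarith
  set U : ℂ → ℂ := fun z => htF f z / (htF f z + t * Complex.I) with hU
  have hUd : ∀ z : ℂ, 0 < z.im → DifferentiableAt ℂ U z := by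
    intro z hz
    have h1 := htF_diff f hf z hz
    refine h1.div (h1.add_const _) ?_
    exact norm_pos_iff.1 (ht.trans_le (ht_add_I _ (htF_im_nonneg f hf h0 z hz) t ht))
  have hUn : ∀ z : ℂ, 0 < z.im → (∀ y : ℝ, |y| ≤ R → N / 2 ≤ ‖(y : ℂ) - z‖) →
      ‖U z‖ ≤ 2 * J / (N * t) := by
    intro z hz h
    have h1 := htF_norm f hf z (N / 2) (by positivity) (fun y hy => h y (hs y hy))
    have h2 := ht_add_I _ (htF_im_nonneg f hf h0 z hz) t ht
    rw [hU]; simp only [norm_div]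
    calc _ ≤ (J / (N / 2)) / t := by gcongr
      _ = _ := by field_simp
  have hrect := Complex.integral_boundary_rect_eq_zero_of_differentiableOn U
    (⟨-N, ε⟩ : ℂ) (⟨N, ε + N⟩ : ℂ) (by
      intro z hz
      refine (hUd z ?_).differentiableWithinAt
      have := hz.2
      simp only [Set.mem_preimage] at this
      rw [Set.uIcc_of_le (by linarith)] at this
      linarith [this.1])
  simp only at hrect
  have e1 : ‖∫ x : ℝ in (-N)..N, U (x + (ε + N : ℝ) * Complex.I)‖ ≤ 2 * J / (N * t) * |N - -N| := by
    apply intervalIntegral.norm_integral_le_of_norm_le_const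
    intro x _
    refine hUn _ (by simp; linarith) fun y hy => ?_
    have := ht_norm_sub y (x + (ε + N : ℝ) * Complex.I)
    simp at this
    rw [abs_of_pos (by linarith)] at this
    push_cast
    linarith
  have e2 : ‖∫ y : ℝ in ε..(ε + N), U ((N : ℝ) + y * Complex.I)‖
      ≤ 2 * J / (N * t) * |ε + N - ε| := by
    apply intervalIntegral.norm_integral_le_of_norm_le_const
    intro x hx
    rw [Set.uIoc_of_le (by linarith)] at hx
    refine hUn _ (by simp; linarith [hx.1]) fun y hy => ?_
    have := Complex.abs_re_le_norm ((y : ℂ) - ((N : ℝ) + x * Complex.I))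
    simp at this
    have h3 := abs_le.1 hy
    have h4 := neg_le_abs (y - N)
    linarith
  have e3 : ‖∫ y : ℝ in ε..(ε + N), U ((-N : ℝ) + y * Complex.I)‖
      ≤ 2 * J / (N * t) * |ε + N - ε| := by
    apply intervalIntegral.norm_integral_le_of_norm_le_const
    intro x hx
    rw [Set.uIoc_of_le (by linarith)] at hx
    refine hUn _ (by simp; linarith [hx.1]) fun y hy => ?_
    have := Complex.abs_re_le_norm ((y : ℂ) - ((-N : ℝ) + x * Complex.I))
    simp at this
    have h3 := abs_le.1 hy
    have h4 := le_abs_self (y + N)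
    simp
    linarith
  have hmain : ‖∫ x : ℝ in (-N)..N, U (x + ε * Complex.I)‖ ≤ 8 * J / t := by
    have : (∫ x : ℝ in (-N)..N, U (x + ε * Complex.I)) =
        (∫ x : ℝ in (-N)..N, U (x + (ε + N : ℝ) * Complex.I))
        - Complex.I * (∫ y : ℝ in ε..(ε + N), U ((N : ℝ) + y * Complex.I))
        + Complex.I * (∫ y : ℝ in ε..(ε + N), U ((-N : ℝ) + y * Complex.I)) := by
      simp only [smul_eq_mul] at hrect
      linear_combination hrect
    rw [this]
    refine (norm_add_le _ _).trans ((add_le_add_left (norm_sub_le _ _) _).trans ?_)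
    rw [norm_mul, norm_mul, Complex.norm_I, one_mul, one_mul]
    refine (add_le_add (add_le_add e1 e2) e3).trans (le_of_eq ?_)
    rw [abs_of_pos (by linarith : 0 < N - -N), abs_of_pos (by linarith : 0 < ε + N - ε)]
    field_simp
    ring
  have hcont : Continuous (fun x : ℝ => U (x + ε * Complex.I)) := by
    rw [continuous_iff_continuousAt]
    intro x
    have h1 : ContinuousAt U ((fun x : ℝ => (x + ε * Complex.I : ℂ)) x) :=
      (hUd _ (by simpa using hε)).continuousAt
    exact ContinuousAt.comp (f := fun x : ℝ => (x + ε * Complex.I : ℂ)) h1 (by fun_prop)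
  have hcre : Continuous (fun x : ℝ => (U (x + ε * Complex.I)).re) :=
    Complex.continuous_re.comp hcont
  have hre : (∫ x : ℝ in (-N)..N, (U (x + ε * Complex.I)).re) ≤ 8 * J / t := by
    have h1 := Complex.reCLM.intervalIntegral_comp_comm
      (hcont.intervalIntegrable (μ := volume) (-N) N)
    simp only [Complex.reCLM_apply] at h1
    rw [h1]
    exact (Complex.re_le_norm _).trans hmain
  rw [intervalIntegral.integral_of_le (by linarith)] at hre
  have him : ∀ x : ℝ, 0 ≤ (htF f (x + ε * Complex.I)).im := fun x =>
    htF_im_nonneg f hf h0 _ (by simpa using hε)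
  have hint : IntegrableOn (fun x : ℝ => (U (x + ε * Complex.I)).re) (Set.Ioc (-N) N) :=
    (hcre.integrableOn_Icc).mono_set Set.Ioc_subset_Icc_self
  have hmk := mul_meas_ge_le_lintegral₀ (μ := volume.restrict (Set.Ioc (-N) N))
    (f := fun x : ℝ => ENNReal.ofReal ((U (x + ε * Complex.I)).re))
    hcre.measurable.ennreal_ofReal.aemeasurable (ENNReal.ofReal (1 / 4))
  rw [← ofReal_integral_eq_lintegral_ofReal hint
    (Eventually.of_forall fun x => ht_phi_nonneg _ (him x) t ht)] at hmk
  have hsub : volume ({x : ℝ | t < |htQ f ε x|} ∩ Set.Ioc (-N) N) ≤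
      (volume.restrict (Set.Ioc (-N) N)) {x : ℝ | ENNReal.ofReal (1 / 4) ≤
        ENNReal.ofReal ((U (x + ε * Complex.I)).re)} := by
    refine le_trans ?_ (Measure.le_restrict_apply _ _)
    refine measure_mono ?_
    rintro x ⟨h1, h2⟩
    refine ⟨?_, h2⟩
    apply ENNReal.ofReal_le_ofReal
    apply ht_phi_ge _ (him x) t ht
    rw [htF_re f hf x ε hε]
    exact h1
  have h5 : ENNReal.ofReal (1 / 4) * volume ({x : ℝ | t < |htQ f ε x|} ∩ Set.Ioc (-N) N)
      ≤ ENNReal.ofReal (8 * J / t) :=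
    (mul_le_mul_right hsub _).trans (hmk.trans (ENNReal.ofReal_le_ofReal hre))
  calc _ = ENNReal.ofReal 4 * (ENNReal.ofReal (1 / 4) *
        volume ({x : ℝ | t < |htQ f ε x|} ∩ Set.Ioc (-N) N)) := by
        rw [← mul_assoc, ← ENNReal.ofReal_mul (by norm_num)]; norm_num
    _ ≤ ENNReal.ofReal 4 * ENNReal.ofReal (8 * J / t) := by gcongr
    _ = _ := by rw [← ENNReal.ofReal_mul (by norm_num)]; congr 1; ring

lemma ht_weak_cpt (f : ℝ → ℝ) (hf : Integrable f) (h0 : ∀ y, 0 ≤ f y) (R : ℝ) (hR : 0 < R)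
    (hs : ∀ y, f y ≠ 0 → |y| ≤ R) (ε t : ℝ) (hε : 0 < ε) (ht : 0 < t) :
    volume {x : ℝ | t < |htQ f ε x|} ≤ ENNReal.ofReal (32 * (∫ y, |f y|) / t) := by
  have hmono : Monotone (fun n : ℕ => {x : ℝ | t < |htQ f ε x|} ∩
      Set.Ioc (-(2 * R + n)) (2 * R + n)) := by
    intro a b hab x hx
    have : (a : ℝ) ≤ b := by exact_mod_cast hab
    exact ⟨hx.1, by linarith [hx.2.1], by linarith [hx.2.2]⟩
  calc _ ≤ volume (⋃ n : ℕ, {x : ℝ | t < |htQ f ε x|} ∩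
          Set.Ioc (-(2 * R + n)) (2 * R + n)) := by
        refine measure_mono fun x hx => ?_
        obtain ⟨n, hn⟩ := exists_nat_gt |x|
        have := abs_lt.1 hn
        exact Set.mem_iUnion.2 ⟨n, hx, by linarith [this.1], by linarith [this.2]⟩
    _ = ⨆ n : ℕ, _ := hmono.measure_iUnion
    _ ≤ _ := iSup_le fun n => ht_weak_cpt_N f hf h0 R hR hs ε t hε ht _ (by
        have : (0 : ℝ) ≤ n := n.cast_nonneg
        linarith)

lemma ht_kernel_bound (ε u : ℝ) (hε : 0 < ε) : |u / (u ^ 2 + ε ^ 2)| ≤ ε⁻¹ := by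
  rw [abs_div, abs_of_pos (by positivity : 0 < u ^ 2 + ε ^ 2), div_le_iff₀ (by positivity),
    ← div_eq_inv_mul, le_div_iff₀ hε]
  nlinarith [sq_nonneg (|u| - ε), sq_abs u, sq_nonneg u]

lemma htQ_integrable (f : ℝ → ℝ) (hf : Integrable f) (ε x : ℝ) (hε : 0 < ε) :
    Integrable (fun y => f y * ((y - x) / ((y - x) ^ 2 + ε ^ 2))) := by
  refine Integrable.mul_bdd (c := ε⁻¹) hf (Measurable.aestronglyMeasurable (by fun_prop)) ?_
  exact Eventually.of_forall fun y => ht_kernel_bound ε _ hε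

lemma ht_weak_pos (f : ℝ → ℝ) (hf : Integrable f) (h0 : ∀ y, 0 ≤ f y)
    (ε t : ℝ) (hε : 0 < ε) (ht : 0 < t) :
    volume {x : ℝ | t < |htQ f ε x|} ≤ ENNReal.ofReal (32 * (∫ y, |f y|) / t) := by
  set F : ℕ → ℝ → ℝ := fun n => (Set.Icc (-(n + 1 : ℝ)) (n + 1)).indicator f with hF
  have hFi : ∀ n, Integrable (F n) := fun n => hf.indicator measurableSet_Icc
  have hle : ∀ n y, |F n y| ≤ |f y| := fun n y => by
    simp only [hF, Set.indicator]; split_ifs <;> simp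
  have := ht_fatou (fun n => htQ (F n) ε) (htQ f ε) Set.univ t
    (ENNReal.ofReal (32 * (∫ y, |f y|) / t)) ?_ ?_
  · simpa using this
  · refine Eventually.of_forall fun x _ => ?_
    apply tendsto_integral_of_dominated_convergence (fun y => |f y| * ε⁻¹)
    · exact fun n => (htQ_integrable _ (hFi n) ε x hε).aestronglyMeasurable
    · exact hf.abs.mul_const _
    · refine fun n => Eventually.of_forall fun y => ?_
      rw [Real.norm_eq_abs, abs_mul]
      exact mul_le_mul (hle n y) (ht_kernel_bound ε _ hε) (abs_nonneg _) (abs_nonneg _)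
    · refine Eventually.of_forall fun y => ?_
      apply tendsto_const_nhds.congr'
      obtain ⟨N, hN⟩ := exists_nat_gt |y|
      filter_upwards [eventually_ge_atTop N] with n hn
      have : (N : ℝ) ≤ n := by exact_mod_cast hn
      have h2 := abs_lt.1 hN
      simp only [hF]
      rw [Set.indicator_of_mem]
      exact ⟨by linarith [h2.1], by linarith [h2.2]⟩
  · intro n
    refine (ht_weak_cpt (F n) (hFi n) ?_ (n + 1) (by positivity) ?_ ε t hε ht).trans ?_
    · exact fun y => Set.indicator_nonneg (fun y _ => h0 y) y
    · intro y hy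
      have := Set.mem_of_indicator_ne_zero hy
      exact abs_le.2 this
    · apply ENNReal.ofReal_le_ofReal
      have : ∫ y, |F n y| ≤ ∫ y, |f y| := integral_mono (hFi n).abs hf.abs (hle n)
      gcongr

lemma htQ_sub (f g : ℝ → ℝ) (hf : Integrable f) (hg : Integrable g) (ε x : ℝ) (hε : 0 < ε) :
    htQ (fun y => f y - g y) ε x = htQ f ε x - htQ g ε x := by
  unfold htQ
  rw [← integral_sub (htQ_integrable f hf ε x hε) (htQ_integrable g hg ε x hε)]
  congr 1; ext y; ring

lemma ht_weak (f : ℝ → ℝ) (hf : Integrable f) (ε t : ℝ) (hε : 0 < ε) (ht : 0 < t) :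
    volume {x : ℝ | t < |htQ f ε x|} ≤ ENNReal.ofReal (64 * (∫ y, |f y|) / t) := by
  have hp : Integrable (fun y => max (f y) 0) := hf.pos_part
  have hn : Integrable (fun y => max (-f y) 0) := hf.neg_part
  have h1 := ht_weak_pos _ hp (fun y => le_max_right _ _) ε (t / 2) hε (by positivity)
  have h2 := ht_weak_pos _ hn (fun y => le_max_right _ _) ε (t / 2) hε (by positivity)
  have heq : f = fun y => max (f y) 0 - max (-f y) 0 := by
    ext y
    rcases le_total (f y) 0 with h | h
    · rw [max_eq_right h, max_eq_left (by linarith)]; ring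
    · rw [max_eq_left h, max_eq_right (by linarith)]; ring
  have hQ : ∀ x, htQ f ε x = htQ (fun y => max (f y) 0) ε x - htQ (fun y => max (-f y) 0) ε x := by
    intro x
    rw [← htQ_sub _ _ hp hn ε x hε, ← heq]
  calc _ ≤ volume ({x : ℝ | t / 2 < |htQ (fun y => max (f y) 0) ε x|} ∪
        {x : ℝ | t / 2 < |htQ (fun y => max (-f y) 0) ε x|}) := by
        refine measure_mono fun x hx => ?_
        simp only [Set.mem_ofPred_eq, Set.mem_union] at hx ⊢
        rw [hQ x] at hx
        by_contra! hcon
        have := abs_sub (htQ (fun y => max (f y) 0) ε x) (htQ (fun y => max (-f y) 0) ε x)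
        linarith [hcon.1, hcon.2]
    _ ≤ _ := (measure_union_le _ _).trans (add_le_add h1 h2)
    _ = _ := by
        rw [← ENNReal.ofReal_add]
        · congr 1
          have : ∫ y, |f y| = (∫ y, |max (f y) 0|) + ∫ y, |max (-f y) 0| := by
            rw [← integral_add hp.abs hn.abs]
            congr 1; ext y
            rcases le_total (f y) 0 with h | h
            · rw [max_eq_right h, max_eq_left (by linarith)]; simp
            · rw [max_eq_left h, max_eq_right (by linarith)]; simp
          rw [this]; field_simp; ring
        · have : 0 ≤ ∫ y, |max (f y) 0| := integral_nonneg fun y => abs_nonneg _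
          positivity
        · have : 0 ≤ ∫ y, |max (-f y) 0| := integral_nonneg fun y => abs_nonneg _
          positivity

noncomputable def htw (v : ℝ) : ℝ := 2 * v / (1 + v ^ 2) ^ 2

lemma htw_deriv (v : ℝ) : HasDerivAt (fun v : ℝ => 1 - (1 + v ^ 2)⁻¹) (htw v) v := by
  have h : HasDerivAt (fun v : ℝ => 1 + v ^ 2) (2 * v) v := by
    simpa using (hasDerivAt_pow 2 v).const_add 1
  have h2 := (h.inv (by positivity)).const_sub 1
  refine HasDerivAt.congr_deriv h2 ?_
  unfold htw; ring

lemma htw_tendsto : Tendsto (fun v : ℝ => 1 - (1 + v ^ 2)⁻¹) atTop (𝓝 1) := by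
  have : Tendsto (fun v : ℝ => 1 + v ^ 2) atTop atTop :=
    tendsto_atTop_add_const_left _ _ (tendsto_pow_atTop two_ne_zero)
  simpa using (tendsto_inv_atTop_zero.comp this).const_sub 1

lemma htw_nonneg (v : ℝ) (hv : 0 ≤ v) : 0 ≤ htw v := by unfold htw; positivity

lemma htw_integrable : IntegrableOn htw (Set.Ioi 0) :=
  integrableOn_Ioi_deriv_of_nonneg' (fun v _ => htw_deriv v)
    (fun v hv => htw_nonneg v (le_of_lt hv)) htw_tendsto

lemma htw_integral : ∫ v in Set.Ioi 0, htw v = 1 := by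
  rw [integral_Ioi_of_hasDerivAt_of_nonneg' (fun v _ => htw_deriv v)
    (fun v hv => htw_nonneg v (le_of_lt hv)) htw_tendsto]
  simp

lemma htw_cont : Continuous htw := by
  unfold htw
  exact Continuous.div (by fun_prop) (by fun_prop) (fun v => by positivity)

lemma htw_integral_lt (a : ℝ) (ha : 0 ≤ a) :
    ∫ v in Set.Ioi 0, (Set.Iio a).indicator htw v = a ^ 2 / (1 + a ^ 2) := by
  rw [integral_indicator measurableSet_Iio, Measure.restrict_restrict measurableSet_Iio,
    Set.Iio_inter_Ioi, ← integral_Ioc_eq_integral_Ioo, ← intervalIntegral.integral_of_le ha,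
    intervalIntegral.integral_eq_sub_of_hasDerivAt (fun v _ => htw_deriv v)
      (htw_cont.intervalIntegrable _ _)]
  field_simp
  ring

/-- the truncated integral -/
noncomputable def htK (f : ℝ → ℝ) (x s : ℝ) : ℝ := ∫ y in {y : ℝ | s < |y - x|}, f y / (y - x)

lemma ht_mset (x s : ℝ) : MeasurableSet {y : ℝ | s < |y - x|} :=
  measurableSet_lt measurable_const (by fun_prop)

lemma htK_bound (f : ℝ → ℝ) (hf : Integrable f) (x s : ℝ) (hs : 0 < s) :
    |htK f x s| ≤ (∫ y, |f y|) / s := by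
  unfold htK
  rw [← integral_indicator (ht_mset x s), div_eq_mul_inv, ← integral_mul_const,
    ← Real.norm_eq_abs]
  refine norm_integral_le_of_norm_le (hf.abs.mul_const _) (Eventually.of_forall fun y => ?_)
  by_cases h : s < |y - x|
  · rw [Set.indicator_of_mem (by exact h), Real.norm_eq_abs, abs_div, div_eq_mul_inv]
    gcongr
  · rw [Set.indicator_of_notMem (by exact h)]
    simp; positivity

lemma ht_fubini (f : ℝ → ℝ) (hf : Integrable f) (x ε : ℝ) (hε : 0 < ε) :
    IntegrableOn (fun v => htw v * htK f x (ε * v)) (Set.Ioi 0) ∧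
    htQ f ε x = ∫ v in Set.Ioi 0, htw v * htK f x (ε * v) := by
  set G : ℝ → ℝ → ℝ := fun y v => f y / (y - x) * (Set.Iio (|y - x| / ε)).indicator htw v with hG
  have hind : ∀ y v : ℝ, (Set.Iio (|y - x| / ε)).indicator htw v =
      {p : ℝ × ℝ | p.2 < |p.1 - x| / ε}.indicator (fun p => htw p.2) (y, v) := by
    intro y v
    simp [Set.indicator]
  have hGm : AEStronglyMeasurable (Function.uncurry G)
      ((volume : Measure ℝ).prod (volume.restrict (Set.Ioi (0 : ℝ)))) := by
    have h1 : AEStronglyMeasurable (fun p : ℝ × ℝ => f p.1)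
      ((volume : Measure ℝ).prod (volume.restrict (Set.Ioi (0 : ℝ)))) :=
      hf.aestronglyMeasurable.comp_fst
    have h2 : Measurable (fun p : ℝ × ℝ => (p.1 - x)⁻¹) := by fun_prop
    have h3 : Measurable ({p : ℝ × ℝ | p.2 < |p.1 - x| / ε}.indicator (fun p => htw p.2)) :=
      (htw_cont.measurable.comp measurable_snd).indicator
        (measurableSet_lt (by fun_prop) (by fun_prop))
    refine ((h1.mul h2.aestronglyMeasurable).mul h3.aestronglyMeasurable).congr ?_
    refine Eventually.of_forall fun p => ?_
    obtain ⟨y, v⟩ := p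
    simp only [Function.uncurry, hG, Pi.mul_apply]
    rw [hind, div_eq_mul_inv (f y)]
  have hwv : IntegrableOn (fun v : ℝ => 2 * ε⁻¹ * (1 + v ^ 2)⁻¹) (Set.Ioi 0) :=
    (integrable_inv_one_add_sq.const_mul _).integrableOn
  have hdom : Integrable (fun p : ℝ × ℝ => |f p.1| * (2 * ε⁻¹ * (1 + p.2 ^ 2)⁻¹))
      ((volume : Measure ℝ).prod (volume.restrict (Set.Ioi (0 : ℝ)))) := hf.abs.mul_prod hwv
  have hpos : ∀ᵐ p ∂((volume : Measure ℝ).prod (volume.restrict (Set.Ioi (0 : ℝ)))),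
      0 < p.2 := Measure.quasiMeasurePreserving_snd.ae
        (ae_restrict_mem (μ := (volume : Measure ℝ)) (s := Set.Ioi 0) measurableSet_Ioi)
  have hGi : Integrable (Function.uncurry G)
      ((volume : Measure ℝ).prod (volume.restrict (Set.Ioi (0 : ℝ)))) := by
    refine hdom.mono' hGm ?_
    filter_upwards [hpos] with p hp
    obtain ⟨y, v⟩ := p
    simp only [Function.uncurry, hG] at hp ⊢
    by_cases h : v < |y - x| / ε
    · rw [Set.indicator_of_mem (by exact h), norm_mul, norm_div, Real.norm_eq_abs,
        Real.norm_eq_abs, Real.norm_eq_abs, abs_of_nonneg (htw_nonneg v hp.le)]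
      have h1 : v * ε < |y - x| := (lt_div_iff₀ hε).1 h
      have h2 : (0 : ℝ) < v * ε := by positivity
      calc |f y| / |y - x| * htw v ≤ |f y| / (v * ε) * htw v := by
            have := htw_nonneg v hp.le
            gcongr
        _ = |f y| * (2 * ε⁻¹ * ((1 + v ^ 2)⁻¹ * (1 + v ^ 2)⁻¹)) := by
            unfold htw; field_simp
        _ ≤ |f y| * (2 * ε⁻¹ * ((1 + v ^ 2)⁻¹ * 1)) := by
            gcongr
            exact inv_le_one_of_one_le₀ (by nlinarith)
        _ = _ := by ring
    · rw [Set.indicator_of_notMem (by exact h)]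
      simp; positivity
  have hinner : ∀ v ∈ Set.Ioi (0 : ℝ), ∫ y, G y v = htw v * htK f x (ε * v) := by
    intro v hv
    unfold htK
    rw [← integral_indicator (ht_mset x _), ← integral_const_mul]
    congr 1; ext y
    simp only [hG, Set.indicator, Set.mem_Iio, Set.mem_ofPred_eq, lt_div_iff₀ hε, mul_comm ε v]
    split_ifs <;> ring
  constructor
  · have := hGi.integral_prod_right
    refine Integrable.congr this ?_
    filter_upwards [ae_restrict_mem measurableSet_Ioi] with v hv
    exact hinner v hv
  · rw [← setIntegral_congr_fun measurableSet_Ioi hinner, ← integral_integral_swap hGi]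
    unfold htQ
    congr 1; ext y
    simp only [hG]
    rw [integral_const_mul, htw_integral_lt _ (by positivity), div_pow, sq_abs]
    rcases eq_or_ne (y - x) 0 with h | h
    · simp [h]
    · field_simp
      ring

lemma ht_limit (f : ℝ → ℝ) (hf : Integrable f) (x a : ℝ)
    (h : Tendsto (htK f x) (𝓝[>] (0 : ℝ)) (𝓝 a)) (e : ℕ → ℝ) (he : ∀ n, 0 < e n)
    (he0 : Tendsto e atTop (𝓝 0)) :
    Tendsto (fun n => htQ f (e n) x) atTop (𝓝 a) := by
  have hJ0 : 0 ≤ ∫ y, |f y| := integral_nonneg fun y => abs_nonneg _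
  obtain ⟨M, hM⟩ : ∃ M, ∀ s, 0 < s → |htK f x s| ≤ M := by
    have h1 := h.abs.eventually (gt_mem_nhds (lt_add_one |a|))
    rw [eventually_nhdsWithin_iff, Metric.eventually_nhds_iff] at h1
    obtain ⟨s0, hs0, h2⟩ := h1
    refine ⟨max (|a| + 1) ((∫ y, |f y|) / s0), fun s hs => ?_⟩
    rcases lt_or_ge s s0 with h3 | h3
    · exact (h2 (by simpa [abs_of_pos hs] using h3) hs).le.trans (le_max_left _ _)
    · refine (htK_bound f hf x s hs).trans (le_trans ?_ (le_max_right _ _))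
      gcongr
  have : a = ∫ v in Set.Ioi 0, htw v * a := by rw [integral_mul_const, htw_integral, one_mul]
  rw [this]
  simp_rw [fun n => (ht_fubini f hf x (e n) (he n)).2]
  apply tendsto_integral_of_dominated_convergence (fun v => htw v * M)
  · exact fun n => (ht_fubini f hf x (e n) (he n)).1.aestronglyMeasurable
  · exact htw_integrable.mul_const M
  · intro n
    filter_upwards [ae_restrict_mem measurableSet_Ioi] with v hv
    rw [norm_mul, Real.norm_eq_abs, abs_of_nonneg (htw_nonneg v (le_of_lt hv))]
    exact mul_le_mul_of_nonneg_left (hM _ (mul_pos (he n) hv)) (htw_nonneg v (le_of_lt hv))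
  · filter_upwards [ae_restrict_mem measurableSet_Ioi] with v hv
    refine Tendsto.const_mul _ (h.comp ?_)
    refine tendsto_nhdsWithin_iff.2 ⟨by simpa using he0.mul_const v, ?_⟩
    exact Eventually.of_forall fun n => mul_pos (he n) hv

lemma ht_e_pos (n : ℕ) : (0 : ℝ) < 1 / ((n : ℝ) + 1) := by positivity

lemma ht_weak_g (f g : ℝ → ℝ) (hf : Integrable f)
    (hfg : ∀ᵐ x : ℝ, Tendsto (htK f x) (𝓝[>] (0 : ℝ)) (𝓝 (g x))) (t : ℝ) (ht : 0 < t) :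
    volume {x : ℝ | t < |g x|} ≤ ENNReal.ofReal (64 * (∫ y, |f y|) / t) := by
  have := ht_fatou (fun n => htQ f (1 / ((n : ℝ) + 1))) g Set.univ t
    (ENNReal.ofReal (64 * (∫ y, |f y|) / t)) ?_ (fun n => ht_weak f hf _ t (ht_e_pos n) ht)
  · simpa using this
  · filter_upwards [hfg] with x hx _
    exact ht_limit f hf x (g x) hx _ ht_e_pos tendsto_one_div_add_atTop_nhds_zero_nat

lemma ht_split (f : ℝ → ℝ) (hf : Integrable f) (κ : ℝ) (hκ : 0 < κ) :
    ∃ R : ℝ, 0 < R ∧ ∫ y, |f y - (Set.Icc (-R) R).indicator f y| ≤ κ := by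
  have h : Tendsto (fun n : ℕ => ∫ y, |f y - (Set.Icc (-(n + 1 : ℝ)) (n + 1)).indicator f y|) atTop
      (𝓝 (∫ _ : ℝ, (0 : ℝ))) := by
    apply tendsto_integral_of_dominated_convergence (fun y => |f y|)
    · exact fun n => (hf.sub (hf.indicator measurableSet_Icc)).abs.aestronglyMeasurable
    · exact hf.abs
    · refine fun n => Eventually.of_forall fun y => ?_
      simp only [Set.indicator]; split_ifs <;> simp
    · refine Eventually.of_forall fun y => ?_
      apply tendsto_const_nhds.congr'
      obtain ⟨N, hN⟩ := exists_nat_gt |y|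
      filter_upwards [eventually_ge_atTop N] with n hn
      have : (N : ℝ) ≤ n := by exact_mod_cast hn
      have h2 := abs_lt.1 hN
      rw [Set.indicator_of_mem]
      · simp
      exact ⟨by linarith [h2.1], by linarith [h2.2]⟩
  rw [integral_zero] at h
  obtain ⟨n, hn⟩ := (h.eventually (gt_mem_nhds hκ)).exists
  exact ⟨n + 1, by positivity, hn.le⟩

lemma ht_far (f : ℝ → ℝ) (hf : Integrable f) (R x : ℝ) (hR : 0 < R)
    (hs : ∀ y, f y ≠ 0 → |y| ≤ R) (hx : R < |x|) :
    Tendsto (htK f x) (𝓝[>] (0 : ℝ)) (𝓝 (∫ y, f y / (y - x))) ∧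
    |(∫ y, f y / (y - x)) + (∫ y, f y) / x| ≤ (∫ y, |f y|) * (R / (|x| * (|x| - R))) := by
  have hyx : ∀ y, f y ≠ 0 → |x| - R ≤ |y - x| := by
    intro y hy
    have h1 := hs y hy
    have h2 := abs_sub_abs_le_abs_sub x y
    rw [abs_sub_comm x y] at h2
    linarith
  have hR' : 0 < |x| - R := by linarith
  have hx0 : x ≠ 0 := abs_pos.1 (hR.trans hx)
  constructor
  · apply tendsto_const_nhds.congr'
    have : ∀ᶠ s in 𝓝[>] (0 : ℝ), s < |x| - R := nhdsWithin_le_nhds (gt_mem_nhds hR')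
    filter_upwards [this] with s hs'
    unfold htK
    symm
    apply setIntegral_eq_integral_of_forall_compl_eq_zero
    intro y hy
    by_contra hne
    have hfy : f y ≠ 0 := fun h => hne (by simp [h])
    exact hy (hs'.trans_le (hyx y hfy))
  · have hint : Integrable (fun y => f y / (y - x)) := by
      refine (hf.abs.mul_const (|x| - R)⁻¹).mono' ?_ (Eventually.of_forall fun y => ?_)
      · simp only [div_eq_mul_inv]
        exact hf.aestronglyMeasurable.mul (Measurable.aestronglyMeasurable (by fun_prop))
      · by_cases hy : f y = 0
        · simp [hy]
        · rw [Real.norm_eq_abs, abs_div, div_eq_mul_inv]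
          gcongr
          exact hyx y hy
    rw [← integral_div, ← integral_add hint (hf.div_const x), ← integral_mul_const,
      ← Real.norm_eq_abs]
    refine norm_integral_le_of_norm_le (hf.abs.mul_const _) (Eventually.of_forall fun y => ?_)
    by_cases hy : f y = 0
    · simp [hy]
    · have h1 := hyx y hy
      have h3 : y - x ≠ 0 := abs_pos.1 (hR'.trans_le h1)
      have : f y / (y - x) + f y / x = f y * (y / (x * (y - x))) := by
        field_simp; ring
      rw [this, norm_mul, Real.norm_eq_abs, Real.norm_eq_abs, abs_div, abs_mul]
      have := hs y hy
      gcongr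

lemma ht_lower (f g : ℝ → ℝ) (hf : Integrable f)
    (hfg : ∀ᵐ x : ℝ, Tendsto (htK f x) (𝓝[>] (0 : ℝ)) (𝓝 (g x))) (δ : ℝ) (hδ : 0 < δ)
    (κ : ℝ) (hκ : 0 < κ) :
    ∃ X : ℝ, ∀ t, 0 < t → 2 * ((|∫ y, f y| - 2 * κ) / (1 + δ)) - 2 * X * t - 64 * κ / δ
      ≤ t * (volume {x : ℝ | t < |g x|}).toReal := by
  obtain ⟨R, hR, hRk⟩ := ht_split f hf κ hκ
  set f1 := (Set.Icc (-R) R).indicator f with hf1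
  have hf1i : Integrable f1 := hf.indicator measurableSet_Icc
  have hs : ∀ y, f1 y ≠ 0 → |y| ≤ R := by
    intro y hy
    have h1 : y ∈ Set.Icc (-R) R := Set.mem_of_indicator_ne_zero hy
    exact abs_le.2 h1
  set G : ℝ → ℝ := fun x => ∫ y, f1 y / (y - x) with hG
  set J := ∫ y, |f1 y| with hJ
  have hJ0 : 0 ≤ J := integral_nonneg fun y => abs_nonneg _
  have hI : |∫ y, f y| - κ ≤ |∫ y, f1 y| := by
    have h1 : |(∫ y, f y) - ∫ y, f1 y| ≤ κ := by
      rw [← integral_sub hf hf1i]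
      exact (abs_integral_le_integral_abs).trans hRk
    have := abs_sub_abs_le_abs_sub (∫ y, f y) (∫ y, f1 y)
    linarith
  set X := R + J * R / κ with hX
  have hXR : R ≤ X := by rw [hX]; have : 0 ≤ J * R / κ := by positivity
                         linarith
  refine ⟨X, fun t ht => ?_⟩
  set A := (|∫ y, f y| - 2 * κ) / (1 + δ) with hA
  have hGx : ∀ x, X < |x| → |x| < A / t → (1 + δ) * t < |G x| := by
    intro x h1 h2
    have hx : R < |x| := by linarith
    have hx0 : 0 < |x| := by linarith
    have hxR : 0 < |x| - R := by linarith
    have h3 := (ht_far f1 hf1i R x hR hs hx).2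
    have h4 : J * (R / (|x| * (|x| - R))) ≤ κ / |x| := by
      have : J * R ≤ κ * (|x| - R) := by
        have : J * R / κ ≤ |x| - R := by linarith
        rw [div_le_iff₀ hκ] at this
        linarith
      rw [← mul_div_assoc, div_le_div_iff₀ (by positivity) hx0]
      nlinarith
    have h5 : |∫ y, f1 y| / |x| - κ / |x| ≤ |G x| := by
      rw [← abs_div]
      have h6 := abs_sub_abs_le_abs_sub ((∫ y, f1 y) / x) (-G x)
      rw [abs_neg, sub_neg_eq_add, add_comm _ (G x)] at h6
      linarith
    have h7 : (|∫ y, f y| - 2 * κ) / |x| ≤ |G x| := by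
      refine le_trans ?_ h5
      rw [← sub_div]
      exact div_le_div_of_nonneg_right (by linarith) hx0.le
    refine lt_of_lt_of_le ?_ h7
    rw [lt_div_iff₀ ht, hA, lt_div_iff₀ (by linarith)] at h2
    rw [lt_div_iff₀ hx0]
    linarith
  have hfin : volume {x : ℝ | t < |g x|} ≠ ⊤ :=
    ne_top_of_le_ne_top ENNReal.ofReal_ne_top (ht_weak_g f g hf hfg t ht)
  have hd : volume {x : ℝ | x ∈ {x : ℝ | R < |x|} ∧ δ * t < |g x - G x|} ≤
      ENNReal.ofReal (64 * κ / (δ * t)) := by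
    refine ht_fatou (fun n => htQ (fun y => f y - f1 y) (1 / ((n : ℝ) + 1))) _ _ _ _ ?_ ?_
    · filter_upwards [hfg] with x hx hxR
      have h1 := ht_limit f hf x (g x) hx _ ht_e_pos tendsto_one_div_add_atTop_nhds_zero_nat
      have h2 := ht_limit f1 hf1i x (G x) (ht_far f1 hf1i R x hR hs hxR).1 _ ht_e_pos
        tendsto_one_div_add_atTop_nhds_zero_nat
      simp_rw [fun n : ℕ => htQ_sub f f1 hf hf1i _ x (ht_e_pos n)]
      exact h1.sub h2
    · intro n
      refine (ht_weak _ (hf.sub hf1i) _ _ (ht_e_pos n) (by positivity)).trans ?_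
      apply ENNReal.ofReal_le_ofReal
      gcongr
      exact hRk
  have hvol : ENNReal.ofReal (A / t - X) + ENNReal.ofReal (A / t - X) ≤
      volume {x : ℝ | t < |g x|} + ENNReal.ofReal (64 * κ / (δ * t)) := by
    have e1 : volume (Set.Ioo X (A / t)) = ENNReal.ofReal (A / t - X) := Real.volume_Ioo
    have e2 : volume (Set.Ioo (-(A / t)) (-X)) = ENNReal.ofReal (A / t - X) := by
      rw [Real.volume_Ioo]; congr 1; ring
    have hdisj : Disjoint (Set.Ioo X (A / t)) (Set.Ioo (-(A / t)) (-X)) := by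
      rw [Set.disjoint_left]
      intro x h1 h2
      linarith [h1.1, h2.2]
    calc _ = volume (Set.Ioo X (A / t) ∪ Set.Ioo (-(A / t)) (-X)) := by
          rw [measure_union hdisj measurableSet_Ioo, e1, e2]
      _ ≤ volume ({x : ℝ | t < |g x|} ∪
          {x : ℝ | x ∈ {x : ℝ | R < |x|} ∧ δ * t < |g x - G x|}) := by
          refine measure_mono fun x hx => ?_
          have hx' : X < |x| ∧ |x| < A / t := by
            rcases hx with h | h
            · have : 0 < x := by linarith [h.1]
              rw [abs_of_pos this]; exact h
            · have : x < 0 := by linarith [h.2]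
              rw [abs_of_neg this]; exact ⟨by linarith [h.2], by linarith [h.1]⟩
          have h3 := hGx x hx'.1 hx'.2
          by_cases h4 : t < |g x|
          · exact Or.inl h4
          · right
            refine ⟨lt_of_le_of_lt hXR hx'.1, ?_⟩
            have h5 := abs_sub_abs_le_abs_sub (G x) (g x)
            rw [abs_sub_comm (G x)] at h5
            linarith
      _ ≤ _ := (measure_union_le _ _).trans (add_le_add le_rfl hd)
  have hk0 : 0 ≤ 64 * κ / (δ * t) := by positivity
  have hreal : 2 * (A / t - X) ≤ (volume {x : ℝ | t < |g x|}).toReal + 64 * κ / (δ * t) := by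
    have h1 := ENNReal.toReal_mono (ENNReal.add_ne_top.2 ⟨hfin, ENNReal.ofReal_ne_top⟩) hvol
    rw [ENNReal.toReal_add ENNReal.ofReal_ne_top ENNReal.ofReal_ne_top,
      ENNReal.toReal_add hfin ENNReal.ofReal_ne_top, ENNReal.toReal_ofReal hk0,
      ENNReal.toReal_ofReal'] at h1
    linarith [le_max_left (A / t - X) 0]
  have h8 := mul_le_mul_of_nonneg_left hreal ht.le
  have h9 : t * (2 * (A / t - X)) = 2 * A - 2 * X * t := by field_simp
  have h10 : t * (64 * κ / (δ * t)) = 64 * κ / δ := by field_simp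
  rw [h9, mul_add (c := 64 * κ / (δ * t)), h10] at h8
  linarith

lemma ht_integrable_zero (g : ℝ → ℝ) (hg : Integrable g) :
    Tendsto (fun t : ℝ => t * (volume {x : ℝ | t < |g x|}).toReal) (𝓝[>] (0 : ℝ)) (𝓝 0) := by
  have hm : ∀ t : ℝ, NullMeasurableSet {x : ℝ | t < |g x|} := fun t =>
    nullMeasurableSet_lt aemeasurable_const hg.abs.aemeasurable
  have h : Tendsto (fun t : ℝ => ∫ x, {x : ℝ | t < |g x|}.indicator (fun _ => t) x)
      (𝓝[>] (0 : ℝ)) (𝓝 (∫ _ : ℝ, (0 : ℝ))) := by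
    apply tendsto_integral_filter_of_dominated_convergence (fun x => |g x|)
    · exact Eventually.of_forall fun t => aestronglyMeasurable_const.indicator₀ (hm t)
    · filter_upwards [self_mem_nhdsWithin] with t ht
      refine Eventually.of_forall fun x => ?_
      have ht' : 0 < t := ht
      by_cases h : t < |g x|
      · rw [Set.indicator_of_mem (by exact h), Real.norm_eq_abs, abs_of_pos ht']; exact h.le
      · rw [Set.indicator_of_notMem (by exact h)]; simp
    · exact hg.abs
    · refine Eventually.of_forall fun x => ?_
      have hid : Tendsto (fun t : ℝ => t) (𝓝[>] (0 : ℝ)) (𝓝 0) := tendsto_id.mono_left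
        nhdsWithin_le_nhds
      refine tendsto_of_tendsto_of_tendsto_of_le_of_le' tendsto_const_nhds hid ?_ ?_
      · filter_upwards [self_mem_nhdsWithin] with t ht
        exact Set.indicator_nonneg (fun _ _ => le_of_lt ht) _
      · filter_upwards [self_mem_nhdsWithin] with t ht
        exact Set.indicator_le_self' (fun _ _ => le_of_lt ht) _
  rw [integral_zero] at h
  refine h.congr fun t => ?_
  rw [integral_indicator₀ (hm t), setIntegral_const, smul_eq_mul, mul_comm]
  rfl

/-- If `f ∈ L¹(ℝ)` has nonzero integral and `g` is its Hilbert transform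
(the principal value integral `g(x) = p.v.∫ f(y)/(y-x) dy`), then
`limsup_{t→0⁺} t·|{|g|>t}| ≥ 2|∫ f| > 0`; in particular `g` is not integrable. -/
theorem hilbert_transform_not_weak_zero (f g : ℝ → ℝ) (hf : Integrable f)
    (hfg : ∀ᵐ x : ℝ,
      Tendsto (fun ε : ℝ => ∫ y in {y : ℝ | ε < |y - x|}, f y / (y - x))
        (𝓝[>] (0 : ℝ)) (𝓝 (g x)))
    (hne : ∫ y : ℝ, f y ≠ 0) :
    2 * |∫ y : ℝ, f y| ≤
        Filter.limsup (fun t : ℝ => t * (volume {x : ℝ | t < |g x|}).toReal)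
          (𝓝[>] (0 : ℝ)) ∧
      0 < 2 * |∫ y : ℝ, f y| ∧ ¬ Integrable g := by
  have hfg' : ∀ᵐ x : ℝ, Tendsto (htK f x) (𝓝[>] (0 : ℝ)) (𝓝 (g x)) := hfg
  have hpos : 0 < 2 * |∫ y : ℝ, f y| := by have := abs_pos.2 hne; positivity
  have hJ0 : 0 ≤ ∫ y, |f y| := integral_nonneg fun y => abs_nonneg _
  have hbdd : IsBoundedUnder (· ≤ ·) (𝓝[>] (0 : ℝ))
      (fun t : ℝ => t * (volume {x : ℝ | t < |g x|}).toReal) := by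
    refine isBoundedUnder_of_eventually_le (a := 64 * ∫ y, |f y|) ?_
    filter_upwards [self_mem_nhdsWithin] with t ht
    have ht' : 0 < t := ht
    have h1 := ENNReal.toReal_mono ENNReal.ofReal_ne_top (ht_weak_g f g hf hfg' t ht')
    rw [ENNReal.toReal_ofReal (by positivity)] at h1
    calc _ ≤ t * (64 * (∫ y, |f y|) / t) := by gcongr
      _ = _ := by field_simp
  have hmain : 2 * |∫ y : ℝ, f y| ≤
        Filter.limsup (fun t : ℝ => t * (volume {x : ℝ | t < |g x|}).toReal)
          (𝓝[>] (0 : ℝ)) := by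
    refine le_of_forall_lt fun c hc => ?_
    have hlim : Tendsto (fun δ : ℝ => 2 * ((|∫ y, f y| - 2 * δ ^ 2) / (1 + δ)) - 64 * δ)
        (𝓝[>] (0 : ℝ)) (𝓝 (2 * |∫ y, f y|)) := by
      have : ContinuousAt (fun δ : ℝ => 2 * ((|∫ y, f y| - 2 * δ ^ 2) / (1 + δ)) - 64 * δ) 0 := by
        refine ContinuousAt.sub (ContinuousAt.mul continuousAt_const
          (ContinuousAt.div (by fun_prop) (by fun_prop) (by norm_num))) (by fun_prop)
      have h2 := this.tendsto
      simp only [ne_eq, OfNat.ofNat_ne_zero, not_false_eq_true, zero_pow, mul_zero, sub_zero,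
        add_zero, div_one] at h2
      exact h2.mono_left nhdsWithin_le_nhds
    obtain ⟨c', hc1, hc2⟩ := exists_between hc
    obtain ⟨δ, h1, h2⟩ := ((hlim.eventually (lt_mem_nhds hc2)).and self_mem_nhdsWithin).exists
    have hδ : 0 < δ := h2
    obtain ⟨X, hX⟩ := ht_lower f g hf hfg' δ hδ (δ ^ 2) (by positivity)
    refine hc1.trans_le (le_limsup_of_frequently_le (Eventually.frequently ?_) hbdd)
    have h64 : 64 * δ ^ 2 / δ = 64 * δ := by field_simp
    rw [h64] at hX
    have hlim2 : Tendsto (fun t : ℝ => 2 * ((|∫ y, f y| - 2 * δ ^ 2) / (1 + δ)) - 2 * X * t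
        - 64 * δ) (𝓝[>] (0 : ℝ)) (𝓝 (2 * ((|∫ y, f y| - 2 * δ ^ 2) / (1 + δ)) - 64 * δ)) := by
      have : Continuous (fun t : ℝ => 2 * ((|∫ y, f y| - 2 * δ ^ 2) / (1 + δ)) - 2 * X * t
        - 64 * δ) := by fun_prop
      have h2 := this.tendsto 0
      simp only [mul_zero, sub_zero] at h2
      exact h2.mono_left nhdsWithin_le_nhds
    filter_upwards [hlim2.eventually (lt_mem_nhds h1), self_mem_nhdsWithin] with t ht1 ht2
    exact ht1.le.trans (hX t ht2)
  refine ⟨hmain, hpos, fun hg => ?_⟩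
  rw [(ht_integrable_zero g hg).limsup_eq] at hmain
  linarith
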